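/- arXiv:1607.02409 — 11 statements merged into one kernel-verified Lean document; each statement's English description precedes it below -/
import Mathlib

section
/- Let J(x) = x·tanh x for x ∈ ℝ. Then the function x ↦ √(J(x)) is subadditive: for all real x and y, √(J(x+y)) ≤ √(J(x)) + √(J(y)). -/
noncomputable def J (x : ℝ) : ℝ := x * Real.tanh x

lemma sinh_convex_aux : ConvexOn ℝ (Set.Ici 0) Real.sinh := by
  apply MonotoneOn.convexOn_of_deriv (convex_Ici 0) Real.continuous_sinh.continuousOn
    Real.differentiable_sinh.differentiableOn
  rw [Real.deriv_sinh, interior_Ici]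
  intro a ha b hb hab
  rw [Real.cosh_le_cosh, abs_of_pos ha, abs_of_pos hb]
  exact hab

lemma sinh_ratio_aux {a b : ℝ} (hb : 0 ≤ b) (hba : b ≤ a) :
    a * Real.sinh b ≤ b * Real.sinh a := by
  rcases hb.eq_or_lt with rfl | hb0
  · simp
  have ha : 0 < a := hb0.trans_le hba
  have h := sinh_convex_aux.2 (Set.mem_Ici.2 ha.le) (Set.mem_Ici.2 (le_refl (0 : ℝ)))
    (show 0 ≤ b / a by positivity)
    (sub_nonneg.2 ((div_le_one ha).2 hba)) (by ring)
  simp only [smul_eq_mul, mul_zero, add_zero, Real.sinh_zero] at h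
  rw [div_mul_cancel₀ _ ha.ne', div_mul_eq_mul_div, le_div_iff₀ ha] at h
  linarith

lemma tanh_ratio_aux {x s : ℝ} (hx : 0 ≤ x) (hs : x ≤ s) :
    x * Real.tanh s ≤ s * Real.tanh x := by
  have h := sinh_ratio_aux (a := s + x) (b := s - x) (by linarith) (by linarith)
  rw [Real.sinh_add, Real.sinh_sub] at h
  rw [Real.tanh_eq_sinh_div_cosh, Real.tanh_eq_sinh_div_cosh, ← mul_div_assoc, ← mul_div_assoc,
    div_le_div_iff₀ (Real.cosh_pos _) (Real.cosh_pos _)]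
  nlinarith

lemma tanh_mono_aux {x s : ℝ} (hs : x ≤ s) : Real.tanh x ≤ Real.tanh s := by
  have h : 0 ≤ Real.sinh (s - x) := Real.sinh_nonneg_iff.2 (by linarith)
  rw [Real.sinh_sub] at h
  rw [Real.tanh_eq_sinh_div_cosh, Real.tanh_eq_sinh_div_cosh,
    div_le_div_iff₀ (Real.cosh_pos _) (Real.cosh_pos _)]
  nlinarith

lemma tanh_nonneg_aux {x : ℝ} (hx : 0 ≤ x) : 0 ≤ Real.tanh x := by
  simpa using tanh_mono_aux hx

lemma J_abs_aux (x : ℝ) : J |x| = J x := by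
  rcases abs_choice x with h | h <;> simp [h, J]

lemma sqrt_J_lower_aux {x s : ℝ} (hx : 0 ≤ x) (hs : x ≤ s) (h0 : 0 < s) :
    x * Real.sqrt (Real.tanh s / s) ≤ Real.sqrt (J x) := by
  apply Real.le_sqrt_of_sq_le
  rw [mul_pow, Real.sq_sqrt (div_nonneg (tanh_nonneg_aux h0.le) h0.le), J, ← mul_div_assoc,
    div_le_iff₀ h0]
  nlinarith [mul_le_mul_of_nonneg_left (tanh_ratio_aux hx hs) hx]

/-- Subadditivity of the finite-depth dispersion relation `√(x tanh x)`. -/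
theorem sqrt_J_subadditive (x y : ℝ) :
    Real.sqrt (J (x + y)) ≤ Real.sqrt (J x) + Real.sqrt (J y) := by
  rw [← J_abs_aux (x + y), ← J_abs_aux x, ← J_abs_aux y]
  have hx := abs_nonneg x
  have hy := abs_nonneg y
  have hxy := abs_add_le x y
  have h0 := abs_nonneg (x + y)
  generalize |x| = a at *
  generalize |y| = b at *
  generalize |x + y| = c at *
  have h1 : Real.sqrt (J c) ≤ Real.sqrt (J (a + b)) :=
    Real.sqrt_le_sqrt (mul_le_mul hxy (tanh_mono_aux hxy) (tanh_nonneg_aux h0) (by linarith))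
  refine h1.trans ?_
  rcases (add_nonneg hx hy).eq_or_lt with h | h
  · rw [← h]
    simp only [J, zero_mul, Real.sqrt_zero]
    positivity
  have h2 : Real.sqrt (J (a + b)) = (a + b) * Real.sqrt (Real.tanh (a + b) / (a + b)) := by
    rw [J, ← Real.sqrt_sq h.le, ← Real.sqrt_mul (sq_nonneg _), Real.sqrt_sq h.le]
    congr 1
    field_simp
  have h3 := sqrt_J_lower_aux hx (by linarith : a ≤ a + b) h
  have h4 := sqrt_J_lower_aux hy (by linarith : b ≤ a + b) h
  rw [h2]
  linarith
end

section
/- Let J(x) = x·tanh x and Ω(ξ,η,ζ) = J(ξ)² + J(η)² + J(ζ)² − 2J(ξ)J(η) − 2J(η)J(ζ) − 2J(ζ)J(ξ). Then for all real ξ, η, ζ with ξ + η + ζ = 0 one has Ω(ξ,η,ζ) ≤ 0. -/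
noncomputable def Ω (ξ η ζ : ℝ) : ℝ :=
  J ξ ^ 2 + J η ^ 2 + J ζ ^ 2 - 2 * J ξ * J η - 2 * J η * J ζ - 2 * J ζ * J ξ

lemma sinh_le_mul_cosh {x : ℝ} (hx : 0 ≤ x) : Real.sinh x ≤ x * Real.cosh x := by
  have hd : ∀ u : ℝ, HasDerivAt (fun u => u * Real.cosh u - Real.sinh u) (u * Real.sinh u) u := by
    intro u
    have h1 := ((hasDerivAt_id u).mul (Real.hasDerivAt_cosh u)).sub (Real.hasDerivAt_sinh u)
    refine h1.congr_deriv ?_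
    simp
  have hm : MonotoneOn (fun u : ℝ => u * Real.cosh u - Real.sinh u) (Set.Ici 0) := by
    apply monotoneOn_of_deriv_nonneg (convex_Ici 0)
    · exact fun u _ => (hd u).continuousAt.continuousWithinAt
    · exact fun u _ => (hd u).differentiableAt.differentiableWithinAt
    · intro u hu
      rw [interior_Ici] at hu
      have hu' : (0 : ℝ) ≤ u := le_of_lt hu
      rw [(hd u).deriv]
      exact mul_nonneg hu' (Real.sinh_nonneg_iff.2 hu')
  have := hm (Set.mem_Ici.2 le_rfl) (Set.mem_Ici.2 hx) hx
  simp at this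
  linarith

lemma tanh_facts {x : ℝ} (hx : 0 ≤ x) : 0 ≤ Real.tanh x ∧ Real.tanh x ≤ x ∧
    Real.tanh x ≤ 1 ∧ x * (1 - Real.tanh x ^ 2) ≤ Real.tanh x := by
  have hc := Real.cosh_pos x
  have hs := Real.sinh_nonneg_iff.2 hx
  have h1 := Real.cosh_sq x
  have h2 : x ≤ Real.sinh x := Real.self_le_sinh_iff.2 hx
  have hc1 := Real.one_le_cosh x
  rw [Real.tanh_eq_sinh_div_cosh]
  refine ⟨by positivity, ?_, ?_, ?_⟩
  · rw [div_le_iff₀ hc]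
    exact sinh_le_mul_cosh hx
  · rw [div_le_one hc]
    exact (Real.sinh_lt_cosh x).le
  · have : x * (1 - (Real.sinh x / Real.cosh x) ^ 2) = x / Real.cosh x / Real.cosh x := by
      field_simp
      rw [h1]; ring
    rw [this]
    apply div_le_div_of_nonneg_right _ hc.le
    exact (div_le_self hx hc1).trans h2

lemma J_neg (x : ℝ) : J (-x) = J x := by simp [J, Real.tanh_neg]

lemma J_key {x y : ℝ} (hx : 0 ≤ x) (hy : 0 ≤ y) :
    (J (x + y) - J x - J y) ^ 2 ≤ 4 * J x * J y := by
  obtain ⟨s0, sx, s1, hs⟩ := tanh_facts hx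
  obtain ⟨t0, ty, t1, ht⟩ := tanh_facts hy
  have hT : Real.tanh (x + y) =
      (Real.tanh x + Real.tanh y) / (1 + Real.tanh x * Real.tanh y) := by
    have := Real.cosh_pos x
    have := Real.cosh_pos y
    have h3 := Real.cosh_pos (x + y)
    simp only [Real.tanh_eq_sinh_div_cosh]
    rw [Real.cosh_add] at h3
    rw [Real.sinh_add, Real.cosh_add]
    field_simp
  unfold J
  rw [hT]
  generalize Real.tanh x = s at *
  generalize Real.tanh y = t at *
  have hst : 0 ≤ s * t := mul_nonneg s0 t0
  have hD : 0 < 1 + s * t := by linarith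
  have e : (x + y) * ((s + t) / (1 + s * t)) - x * s - y * t
      = (x * (1 - s ^ 2) * t + y * (1 - t ^ 2) * s) / (1 + s * t) := by
    field_simp
    ring
  have hN0 : 0 ≤ x * (1 - s ^ 2) * t + y * (1 - t ^ 2) * s := by
    have : 0 ≤ 1 - s ^ 2 := by nlinarith
    have : 0 ≤ 1 - t ^ 2 := by nlinarith
    positivity
  have hN : x * (1 - s ^ 2) * t + y * (1 - t ^ 2) * s ≤ 2 * (s * t) := by
    have := mul_le_mul_of_nonneg_right hs t0
    have := mul_le_mul_of_nonneg_right ht s0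
    linarith
  have hq : (x * (1 - s ^ 2) * t + y * (1 - t ^ 2) * s) / (1 + s * t) ≤ 2 * (s * t) :=
    (div_le_self hN0 (by linarith)).trans hN
  have hq0 := div_nonneg hN0 hD.le
  rw [e]
  have h5 := pow_le_pow_left₀ hq0 hq 2
  have h6 : s * t ≤ x * y := mul_le_mul sx ty t0 hx
  have h7 := mul_le_mul_of_nonneg_right h6 hst
  linarith

lemma J_key_sum {x y z : ℝ} (h : x + y + z = 0) (hxy : (0 ≤ x ∧ 0 ≤ y) ∨ (x ≤ 0 ∧ y ≤ 0)) :
    (J z - J x - J y) ^ 2 ≤ 4 * J x * J y := by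
  rcases hxy with ⟨hx, hy⟩ | ⟨hx, hy⟩
  · have hz : z = -(x + y) := by linarith
    rw [hz, J_neg]
    exact J_key hx hy
  · have hz : z = -x + -y := by linarith
    have := J_key (neg_nonneg.2 hx) (neg_nonneg.2 hy)
    rw [J_neg x, J_neg y] at this
    rw [hz]
    exact this

/-- The symmetrized resonance function is nonpositive on the resonant plane. -/
theorem resonance_nonpos (ξ η ζ : ℝ) (h : ξ + η + ζ = 0) : Ω ξ η ζ ≤ 0 := by
  have key : ((0 ≤ ξ ∧ 0 ≤ η) ∨ (ξ ≤ 0 ∧ η ≤ 0)) ∨ ((0 ≤ η ∧ 0 ≤ ζ) ∨ (η ≤ 0 ∧ ζ ≤ 0)) ∨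
      ((0 ≤ ζ ∧ 0 ≤ ξ) ∨ (ζ ≤ 0 ∧ ξ ≤ 0)) := by
    rcases le_total 0 ξ with h1 | h1 <;> rcases le_total 0 η with h2 | h2 <;>
      rcases le_total 0 ζ with h3 | h3 <;> tauto
  unfold Ω
  rcases key with k | k | k
  · have := J_key_sum h k
    linarith
  · have := J_key_sum (z := ξ) (by linarith) k
    linarith
  · have := J_key_sum (z := η) (by linarith) k
    linarith
end

section
/- For every real ξ ≠ 0 one has (tanh ξ + ξ(1 − tanh²ξ))² < 4·ξ·tanh ξ. Equivalently, with J(x) = x·tanh x and J' its derivative, the quantity Λ(ξ) = J'(ξ)² − 4J(ξ) is strictly negative for all ξ ≠ 0. -/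
noncomputable def J' (ξ : ℝ) : ℝ := Real.tanh ξ + ξ * (1 - Real.tanh ξ ^ 2)

noncomputable def Λ (ξ : ℝ) : ℝ := J' ξ ^ 2 - 4 * J ξ

lemma main_pos {x : ℝ} (hx : 0 < x) :
    (Real.tanh x + x * (1 - Real.tanh x ^ 2)) ^ 2 < 4 * x * Real.tanh x := by
  have hc : 0 < Real.cosh x := Real.cosh_pos x
  have hc1 : 1 ≤ Real.cosh x := Real.one_le_cosh x
  have hs : x < Real.sinh x := Real.self_lt_sinh_iff.2 hx
  have ht : Real.tanh x * Real.cosh x = Real.sinh x := by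
    rw [Real.tanh_eq_sinh_div_cosh]; field_simp
  have hsq := Real.cosh_sq x
  have ht0 : 0 < Real.tanh x := by
    rw [Real.tanh_eq_sinh_div_cosh]; exact div_pos (hx.trans hs) hc
  have htx : Real.tanh x ≤ x := by
    rw [Real.tanh_eq_sinh_div_cosh, div_le_iff₀ hc]
    exact sinh_le_mul_cosh hx.le
  have ha0 : 0 < x * (1 - Real.tanh x ^ 2) :=
    mul_pos hx (by linarith [Real.tanh_sq_lt_one x])
  have ha : x * (1 - Real.tanh x ^ 2) < Real.tanh x := by
    have e : (1 - Real.tanh x ^ 2) * Real.cosh x ^ 2 = 1 := by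
      have : (1 - Real.tanh x ^ 2) * Real.cosh x ^ 2
        = Real.cosh x ^ 2 - (Real.tanh x * Real.cosh x) ^ 2 := by ring
      rw [this, ht]; linarith
    have h2 : x * (1 - Real.tanh x ^ 2) * Real.cosh x ^ 2 < Real.tanh x * Real.cosh x ^ 2 := by
      have e1 : x * (1 - Real.tanh x ^ 2) * Real.cosh x ^ 2 = x := by rw [mul_assoc, e, mul_one]
      have e2 : Real.tanh x * Real.cosh x ^ 2 = Real.sinh x * Real.cosh x := by rw [← ht]; ring
      rw [e1, e2]
      nlinarith
    exact lt_of_mul_lt_mul_right h2 (by positivity)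
  nlinarith

/-- For every nonzero frequency, `J'(ξ)² < 4 J(ξ)`, i.e. `Λ(ξ) < 0`. -/
theorem Lambda_neg (ξ : ℝ) (hξ : ξ ≠ 0) :
    (Real.tanh ξ + ξ * (1 - Real.tanh ξ ^ 2)) ^ 2 < 4 * ξ * Real.tanh ξ ∧ Λ ξ < 0 := by
  have h : (Real.tanh ξ + ξ * (1 - Real.tanh ξ ^ 2)) ^ 2 < 4 * ξ * Real.tanh ξ := by
    rcases lt_or_gt_of_ne hξ with h | h
    · have := main_pos (neg_pos.2 h)
      rw [Real.tanh_neg] at this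
      nlinarith
    · exact main_pos h
  refine ⟨h, ?_⟩
  unfold Λ J' J
  linarith
end

section
/- Let J(x) = x·tanh x and Ω(ξ,η,ζ) = J(ξ)² + J(η)² + J(ζ)² − 2J(ξ)J(η) − 2J(η)J(ζ) − 2J(ζ)J(ξ). There exists a constant C > 0 such that for all real ξ ≤ −1 and all real η with |η| ≤ −ξ/2, one has |Ω(ξ, η, −ξ−η) − 4J(η)·ξ − (η + J(η))²| ≤ C·(1 + ξ²)·e^{ξ}. -/
theorem one_sub_tanh_bound (x : ℝ) :
    0 ≤ 1 - Real.tanh x ∧ 1 - Real.tanh x ≤ 2 * Real.exp (-(2 * x)) := by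
  refine ⟨by linarith [Real.tanh_lt_one x], ?_⟩
  have h1 := Real.exp_pos x
  have h2 := Real.exp_pos (-x)
  have e1 : Real.exp (-(2 * x)) = Real.exp (-x) * Real.exp (-x) := by
    rw [← Real.exp_add]; congr 1; ring
  have e2 : Real.exp x * Real.exp (-x) = 1 := by
    rw [← Real.exp_add]; simp
  have h3 : 1 - Real.tanh x = 2 * Real.exp (-x) / (Real.exp x + Real.exp (-x)) := by
    rw [Real.tanh_eq]; field_simp; ring
  rw [h3, e1, div_le_iff₀ (by positivity)]
  have : 2 * (Real.exp (-x) * Real.exp (-x)) * (Real.exp x + Real.exp (-x))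
      = 2 * Real.exp (-x) * (Real.exp x * Real.exp (-x)) + 2 * Real.exp (-x) ^ 3 := by ring
  rw [this, e2]
  have := pow_pos h2 3
  linarith

/-- High-frequency asymptotic expansion of the resonance function in the region
`|η| ≪ −ξ`, with exponentially small remainder. -/
theorem resonance_asymptotics :
    ∃ C : ℝ, 0 < C ∧ ∀ ξ η : ℝ, ξ ≤ -1 → |η| ≤ -ξ / 2 →
      |Ω ξ η (-ξ - η) - 4 * J η * ξ - (η + J η) ^ 2| ≤ C * (1 + ξ ^ 2) * Real.exp ξ := by
  refine ⟨17, by norm_num, ?_⟩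
  intro ξ η hξ hη
  obtain ⟨a, rfl⟩ : ∃ a, ξ = -a := ⟨-ξ, by ring⟩
  have ha : 1 ≤ a := by linarith
  rw [neg_neg] at hη
  obtain ⟨hη1, hη2⟩ := abs_le.mp hη
  have hh : |J η| ≤ a / 2 := by
    unfold J
    rw [abs_mul]
    have := (Real.abs_tanh_lt_one η).le
    have h0 := abs_nonneg η
    nlinarith
  have he0 := Real.exp_pos (-a)
  have he1 : Real.exp (-a) ≤ 1 := Real.exp_le_one_iff.mpr (by linarith)
  obtain ⟨p0, p1⟩ := one_sub_tanh_bound a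
  obtain ⟨q0, q1⟩ := one_sub_tanh_bound (a - η)
  have p2 : Real.exp (-(2 * a)) ≤ Real.exp (-a) := Real.exp_le_exp.mpr (by linarith)
  have q2 : Real.exp (-(2 * (a - η))) ≤ Real.exp (-a) := Real.exp_le_exp.mpr (by linarith)
  obtain ⟨p, hp⟩ : ∃ p, p = a * (1 - Real.tanh a) := ⟨_, rfl⟩
  obtain ⟨q, hq⟩ : ∃ q, q = (a - η) * (1 - Real.tanh (a - η)) := ⟨_, rfl⟩
  have hA : J (-a) = a - p := by unfold J; rw [Real.tanh_neg, hp]; ring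
  have hB : J (- -a - η) = (a - η) - q := by unfold J; rw [neg_neg, hq]; ring
  have hp0 : 0 ≤ p := by rw [hp]; exact mul_nonneg (by linarith) p0
  have hq0 : 0 ≤ q := by rw [hq]; exact mul_nonneg (by linarith) q0
  generalize Real.exp (-a) = e at *
  have hp1 : p ≤ 2 * (a * e) := by
    rw [hp]
    have := mul_le_mul_of_nonneg_left (p1.trans (mul_le_mul_of_nonneg_left p2 zero_le_two))
      (by linarith : (0:ℝ) ≤ a)
    linarith
  have hq1 : q ≤ 3 * (a * e) := by
    rw [hq]
    have h1 := mul_le_mul_of_nonneg_left (q1.trans (mul_le_mul_of_nonneg_left q2 zero_le_two))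
      (by linarith : (0:ℝ) ≤ a - η)
    have h2 := mul_le_mul_of_nonneg_right (by linarith : a - η ≤ 3 / 2 * a) he0.le
    linarith
  have hae : a * e ≤ a := by nlinarith
  unfold Ω
  rw [hA, hB]
  generalize J η = h at *
  have key : (a - p) ^ 2 + h ^ 2 + (a - η - q) ^ 2 - 2 * (a - p) * h - 2 * h * (a - η - q)
      - 2 * (a - η - q) * (a - p) - 4 * h * -a - (η + h) ^ 2
      = (q - p) * (2 * η + q - p) + 2 * h * (p + q) := by ring
  rw [key]
  have b1 : |q - p| ≤ 3 * (a * e) := abs_le.mpr ⟨by linarith, by linarith⟩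
  have b2 : |2 * η + q - p| ≤ 4 * a := abs_le.mpr ⟨by linarith, by linarith⟩
  have b3 : |2 * h| ≤ a := by rw [abs_mul, abs_two]; linarith
  have b4 : |p + q| ≤ 5 * (a * e) := abs_le.mpr ⟨by linarith, by linarith⟩
  have c1 := mul_le_mul b1 b2 (abs_nonneg _) (by positivity)
  have c2 := mul_le_mul b3 b4 (abs_nonneg _) (by positivity)
  rw [← abs_mul] at c1 c2
  have := abs_add_le ((q - p) * (2 * η + q - p)) (2 * h * (p + q))
  nlinarith
end

section
/- Let J(x) = x·tanh x. For all real ξ and η with ξ·η ≥ 0 one has |J(ξ) + J(η) − J(ξ+η)| ≤ 2(e^{−|ξ|} + e^{−|η|}). -/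
theorem J_bound_nonneg (x : ℝ) (hx : 0 ≤ x) :
    0 ≤ x - J x ∧ x - J x ≤ 2 * Real.exp (-x) := by
  have h1 := Real.tanh_lt_one x
  unfold J
  refine ⟨by nlinarith, ?_⟩
  have hp := Real.exp_pos x
  have hn := Real.exp_pos (-x)
  have hx1 := Real.add_one_le_exp x
  have e : x - x * Real.tanh x = 2 * x * Real.exp (-x) / (Real.exp x + Real.exp (-x)) := by
    rw [Real.tanh_eq]
    field_simp
    ring
  rw [e, div_le_iff₀ (by positivity)]
  nlinarith [mul_pos hn hn, mul_nonneg hn.le (by linarith : 0 ≤ Real.exp x - x)]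

theorem J_bound (x : ℝ) :
    0 ≤ |x| - J x ∧ |x| - J x ≤ 2 * Real.exp (-|x|) := by
  have e : J x = J |x| := by
    rcases abs_choice x with h | h <;> rw [h]
    simp [J]
  rw [e]
  exact J_bound_nonneg _ (abs_nonneg x)

/-- For frequencies of the same sign, `J(ξ) + J(η) − J(ξ+η)` is exponentially small. -/
theorem J_almost_additive_same_sign (ξ η : ℝ) (h : ξ * η ≥ 0) :
    |J ξ + J η - J (ξ + η)| ≤ 2 * (Real.exp (-|ξ|) + Real.exp (-|η|)) := by
  have hs : |ξ + η| = |ξ| + |η| := by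
    rw [abs_add_eq_add_abs_iff]
    exact mul_nonneg_iff.mp h
  obtain ⟨a1, a2⟩ := J_bound ξ
  obtain ⟨b1, b2⟩ := J_bound η
  obtain ⟨c1, c2⟩ := J_bound (ξ + η)
  rw [hs] at c1 c2
  have hm : Real.exp (-(|ξ| + |η|)) ≤ Real.exp (-|ξ|) :=
    Real.exp_le_exp.mpr (by linarith [abs_nonneg η])
  have hn := Real.exp_pos (-|η|)
  rw [abs_le]
  constructor <;> linarith
end

section
/- Define m : ℝ → ℝ by m(ξ) = 2ξ/sinh(2ξ) for ξ ≠ 0 and m(0) = 1. Then m is integrable on ℝ, and for every real α one has (1/(2π))·∫_ℝ m(ξ)·cos(αξ) dξ = (π/8)·sech²(πα/4). -/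
open MeasureTheory

noncomputable def m (ξ : ℝ) : ℝ := if ξ = 0 then 1 else 2 * ξ / Real.sinh (2 * ξ)

lemma m_even (x : ℝ) : m (-x) = m x := by
  simp [m, Real.sinh_neg]

lemma m_abs (x : ℝ) : m |x| = m x := by
  rcases abs_choice x with h | h <;> rw [h]
  exact m_even x

lemma m_meas : Measurable m := by
  unfold m
  refine Measurable.ite (measurableSet_singleton 0) measurable_const ?_
  fun_prop

lemma m_bound_pos (x : ℝ) (hx : 0 ≤ x) : |m x| ≤ 2 * (1 + x ^ 2)⁻¹ := by
  rcases hx.eq_or_lt with rfl | hx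
  · simp [m]
  · have h1 : x ≤ Real.sinh x := Real.self_le_sinh_iff.2 hx.le
    have h2 : x / 2 ≤ Real.sinh (x / 2) := Real.self_le_sinh_iff.2 (by positivity)
    have h3 : Real.cosh x = 1 + 2 * Real.sinh (x / 2) ^ 2 := by
      have := Real.cosh_two_mul (x / 2)
      rw [show 2 * (x / 2) = x by ring, Real.cosh_sq] at this
      rw [this]; ring
    have h4 : (1 + x ^ 2) / 2 ≤ Real.cosh x := by
      rw [h3]; nlinarith
    have h5 : 0 < Real.sinh x := by linarith
    have h6 : 0 < Real.cosh x := Real.cosh_pos x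
    rw [m, if_neg hx.ne', Real.sinh_two_mul, abs_of_pos (by positivity), ← div_eq_mul_inv,
      div_le_div_iff₀ (by positivity) (by positivity)]
    have : x * (1 + x ^ 2) / 2 ≤ Real.sinh x * Real.cosh x := by
      rw [mul_div_assoc]; gcongr
    nlinarith

lemma m_integrable : Integrable m := by
  refine Integrable.mono' (integrable_inv_one_add_sq.const_mul 2) m_meas.aestronglyMeasurable ?_
  refine Filter.Eventually.of_forall fun x => ?_
  have := m_bound_pos |x| (abs_nonneg x)
  rwa [m_abs, sq_abs] at this

lemma cont_lhs : Continuous fun α : ℝ => ∫ ξ : ℝ, m ξ * Real.cos (α * ξ) := by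
  refine continuous_of_dominated (bound := fun x => |m x|) ?_ ?_ m_integrable.abs ?_
  · intro a
    exact (m_meas.mul (by fun_prop)).aestronglyMeasurable
  · intro a
    refine Filter.Eventually.of_forall fun x => ?_
    rw [norm_mul]
    exact mul_le_of_le_one_right (norm_nonneg _) (Real.abs_cos_le_one _)
  · refine Filter.Eventually.of_forall fun x => ?_
    fun_prop

lemma m_hasSum (x : ℝ) (hx : 0 < x) :
    HasSum (fun n : ℕ => 4 * x * Real.exp (-(4 * n + 2) * x)) (m x) := by
  have h := (hasSum_geometric_of_lt_one (Real.exp_pos (-4 * x)).le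
    (by rw [Real.exp_lt_one_iff]; linarith)).mul_left (4 * x * Real.exp (-2 * x))
  convert! h using 1
  · ext n
    rw [← Real.exp_nat_mul, mul_assoc (4 * x), ← Real.exp_add]
    congr 2; ring
  · rw [m, if_neg hx.ne', Real.sinh_eq]
    have e1 : Real.exp (-2 * x) = (Real.exp (2 * x))⁻¹ := by rw [← Real.exp_neg]; congr 1; ring
    have e2 : Real.exp (-(2 * x)) = (Real.exp (2 * x))⁻¹ := by rw [← Real.exp_neg]
    have e3 : Real.exp (-4 * x) = (Real.exp (2 * x))⁻¹ ^ 2 := by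
      rw [← Real.exp_neg, ← Real.exp_nat_mul]; congr 1; push_cast; ring
    have e4 : 1 < Real.exp (2 * x) := Real.one_lt_exp_iff.2 (by linarith)
    rw [e1, e2, e3]
    set y := Real.exp (2 * x)
    have : y ^ 2 - 1 ≠ 0 := by nlinarith
    field_simp
    ring

lemma intble_r (b : ℝ) (hb : 0 < b) :
    IntegrableOn (fun x : ℝ => x * Real.exp (-b * x)) (Set.Ioi 0) := by
  simpa using integrableOn_rpow_mul_exp_neg_mul_rpow (s := 1) (p := 1) (by norm_num) one_pos hb

lemma int_c (c : ℂ) (hc : 0 < c.re) :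
    ∫ x in Set.Ioi (0:ℝ), (x : ℂ) * Complex.exp (-c * x) = 1 / c ^ 2 := by
  have hc0 : c ≠ 0 := by rintro rfl; simp at hc
  have hd : ∀ x ∈ Set.Ici (0:ℝ), HasDerivAt
      (fun x : ℝ => -((x : ℂ) / c + 1 / c ^ 2) * Complex.exp (-c * x))
      ((x : ℂ) * Complex.exp (-c * x)) x := by
    intro x _
    have h0 : HasDerivAt (fun x : ℝ => (x : ℂ)) 1 x := Complex.ofRealCLM.hasDerivAt
    have h1 := ((h0.div_const c).add_const (1 / c ^ 2)).neg
    have h2 := (h0.const_mul (-c)).cexp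
    convert! h1.mul h2 using 1
    simp only [Pi.neg_apply]
    field_simp
    ring
  have hi : IntegrableOn (fun x : ℝ => (x : ℂ) * Complex.exp (-c * x)) (Set.Ioi 0) := by
    refine Integrable.mono' (intble_r c.re hc)
      (Continuous.aestronglyMeasurable (by fun_prop)) ?_
    filter_upwards [ae_restrict_mem measurableSet_Ioi] with x hx
    simp [Complex.norm_exp, abs_of_pos (show 0 < x from hx)]
  have ht : Filter.Tendsto (fun x : ℝ => -((x : ℂ) / c + 1 / c ^ 2) * Complex.exp (-c * x))
      Filter.atTop (nhds 0) := by
    have t1 : Filter.Tendsto (fun x : ℝ => (x : ℂ) * Complex.exp (-c * x))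
        Filter.atTop (nhds 0) := by
      rw [tendsto_zero_iff_norm_tendsto_zero]
      refine (tendsto_rpow_mul_exp_neg_mul_atTop_nhds_zero 1 c.re hc).congr' ?_
      filter_upwards [Filter.eventually_gt_atTop 0] with x hx
      simp [Complex.norm_exp, abs_of_pos hx]
    have t2 : Filter.Tendsto (fun x : ℝ => Complex.exp (-c * x))
        Filter.atTop (nhds 0) := by
      rw [tendsto_zero_iff_norm_tendsto_zero]
      refine (tendsto_rpow_mul_exp_neg_mul_atTop_nhds_zero 0 c.re hc).congr' ?_
      filter_upwards [Filter.eventually_gt_atTop 0] with x hx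
      simp [Complex.norm_exp]
    have := (t1.const_mul (-1 / c)).add (t2.const_mul (-1 / c ^ 2))
    simp only [mul_zero, add_zero] at this
    refine this.congr fun x => ?_
    ring
  rw [integral_Ioi_of_hasDerivAt_of_tendsto' hd hi ht]
  simp

lemma int_r (b : ℝ) (hb : 0 < b) :
    ∫ x in Set.Ioi (0:ℝ), x * Real.exp (-b * x) = 1 / b ^ 2 := by
  have := int_c b (by simpa using hb)
  exact_mod_cast this

lemma summ : Summable fun n : ℕ => 4 * (1 / (4 * (n:ℝ) + 2) ^ 2) := by
  have h := ((Real.summable_nat_pow_inv (p := 2)).2 (by norm_num))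
  have h := (summable_nat_add_iff 1).2 h
  refine Summable.of_nonneg_of_le (fun n => by positivity) (fun n => ?_) (h)
  rw [← one_div, mul_one_div, div_le_div_iff₀ (by positivity) (by positivity)]
  push_cast
  nlinarith [(n.cast_nonneg : (0:ℝ) ≤ n)]

lemma half (α : ℝ) : HasSum (fun n : ℕ => 4 / ((4 * n + 2 : ℂ) - Complex.I * α) ^ 2)
    (∫ x in Set.Ioi (0:ℝ), (m x : ℂ) * Complex.exp (Complex.I * α * x)) := by
  have hn : ∀ (n : ℕ) (x : ℝ), 0 < x →
      ‖4 * ((x : ℂ) * Complex.exp (-((4 * n + 2 : ℂ) - Complex.I * α) * x))‖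
        = 4 * (x * Real.exp (-(4 * n + 2) * x)) := by
    intro n x hx
    simp [Complex.norm_exp, abs_of_pos hx]
  have h := hasSum_integral_of_summable_integral_norm (μ := volume.restrict (Set.Ioi (0:ℝ)))
    (F := fun (n : ℕ) (x : ℝ) => 4 * ((x : ℂ) * Complex.exp (-((4 * n + 2 : ℂ) - Complex.I * α) * x)))
    ?_ ?_
  · convert! h using 1
    · ext n
      rw [integral_const_mul, int_c]
      · ring
      · simp; positivity
    · refine setIntegral_congr_fun measurableSet_Ioi fun x hx => ?_
      have := (Complex.hasSum_ofReal.2 (m_hasSum x hx)).mul_right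
        (Complex.exp (Complex.I * α * x))
      rw [← this.tsum_eq]
      congr 1; ext n
      push_cast
      rw [mul_assoc, mul_assoc, mul_assoc, ← Complex.exp_add]
      congr 4; ring
  · intro n
    refine Integrable.mono' ((intble_r (4 * n + 2) (by positivity)).const_mul 4)
      (Continuous.aestronglyMeasurable (by fun_prop)) ?_
    filter_upwards [ae_restrict_mem measurableSet_Ioi] with x hx
    exact (hn n x hx).le
  · refine summ.congr fun n => ?_
    rw [← int_r _ (by positivity), ← integral_const_mul]
    exact setIntegral_congr_fun measurableSet_Ioi fun x hx => (hn n x hx).symm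

lemma full (α : ℝ) : HasSum (fun n : ℤ => 4 / ((4 * n + 2 : ℂ) + Complex.I * α) ^ 2)
    ((∫ ξ : ℝ, m ξ * Real.cos (α * ξ) : ℝ) : ℂ) := by
  have h1 := half (-α)
  have h2 := half α
  have := HasSum.of_nat_of_neg_add_one
    (f := fun n : ℤ => 4 / ((4 * n + 2 : ℂ) + Complex.I * α) ^ 2)
    (m := ∫ x in Set.Ioi (0:ℝ), (m x : ℂ) * Complex.exp (Complex.I * (-α : ℝ) * x))
    (m' := ∫ x in Set.Ioi (0:ℝ), (m x : ℂ) * Complex.exp (Complex.I * α * x))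
    (by
      convert! h1 using 3 with n
      push_cast; ring)
    (by
      convert! h2 using 3 with n
      push_cast; ring)
  convert! this using 1
  have hI : ∀ β : ℝ, IntegrableOn
      (fun x : ℝ => (m x : ℂ) * Complex.exp (Complex.I * β * x)) (Set.Ioi 0) := by
    intro β
    refine Integrable.mono' m_integrable.abs.integrableOn
      ((Complex.measurable_ofReal.comp m_meas).mul (by fun_prop)).aestronglyMeasurable ?_
    refine Filter.Eventually.of_forall fun x => ?_
    simp [Complex.norm_exp]
  rw [← integral_add (hI _) (hI _)]
  have e : ∫ ξ : ℝ, m ξ * Real.cos (α * ξ) = ∫ ξ : ℝ, (fun y => m y * Real.cos (α * y)) |ξ| := by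
    congr 1; ext x
    simp only [m_abs]
    rw [← Real.cos_abs (α * |x|), ← Real.cos_abs (α * x), abs_mul, abs_mul, abs_abs]
  rw [e, integral_comp_abs (f := fun y => m y * Real.cos (α * y)), ← integral_const_mul, ← integral_complex_ofReal]
  refine integral_congr_ae (Filter.Eventually.of_forall fun x => ?_)
  simp only
  push_cast
  rw [Complex.cos, ← mul_add]
  rw [show Complex.I * -(α:ℂ) * x = -(α * x) * Complex.I by ring,
    show Complex.I * (α:ℂ) * x = (α * x) * Complex.I by ring]
  ring

lemma pos_case (α : ℝ) (hα : 0 < α) : ∫ ξ : ℝ, m ξ * Real.cos (α * ξ) =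
    (Real.pi ^ 2 / 4) * (1 / Real.cosh (Real.pi * α / 4)) ^ 2 := by
  have h := (full α).tsum_eq
  let z : UpperHalfPlane := ⟨1 / 2 + α / 4 * Complex.I, by simp; positivity⟩
  have hz : (z : ℂ) = 1 / 2 + α / 4 * Complex.I := rfl
  have q := EisensteinSeries.qExpansion_identity (k := 1) le_rfl z
  have hq := UpperHalfPlane.norm_exp_two_pi_I_lt_one z
  simp only [pow_one] at q
  rw [tsum_coe_mul_geometric_of_norm_lt_one hq] at q
  have he : Complex.exp (2 * Real.pi * Complex.I * z)
      = ((-(Real.exp (-(Real.pi * α / 4))) ^ 2 : ℝ) : ℂ) := by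
    rw [← Real.exp_nat_mul, hz]
    rw [show 2 * (Real.pi:ℂ) * Complex.I * (1 / 2 + α / 4 * Complex.I)
      = Real.pi * Complex.I + ((2 : ℕ) * (-(Real.pi * α / 4)) : ℝ) by
        push_cast; ring_nf; rw [Complex.I_sq]; ring, Complex.exp_add, Complex.exp_pi_mul_I]
    push_cast; ring
  rw [he] at q
  have hs : ∑' n : ℤ, 4 / ((4 * n + 2 : ℂ) + Complex.I * α) ^ 2
      = 1 / 4 * ∑' n : ℤ, 1 / ((z : ℂ) + n) ^ (1 + 1) := by
    rw [← tsum_mul_left]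
    congr 1; ext n
    rw [hz, show (4 * n + 2 : ℂ) + Complex.I * α = 4 * (1 / 2 + α / 4 * Complex.I + n) by ring,
      mul_pow, div_mul_eq_div_div]
    ring
  rw [hs, q] at h
  have hI : (-2 * (Real.pi : ℂ) * Complex.I) ^ (1 + 1) = ((-4 * Real.pi ^ 2 : ℝ) : ℂ) := by
    push_cast; ring_nf; rw [Complex.I_sq]; ring
  rw [hI] at h
  have h' : (1 / 4 : ℝ) * ((-4 * Real.pi ^ 2) / 1 * ((-(Real.exp (-(Real.pi * α / 4))) ^ 2) /
      (1 - (-(Real.exp (-(Real.pi * α / 4))) ^ 2)) ^ 2)) = ∫ ξ : ℝ, m ξ * Real.cos (α * ξ) := by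
    apply Complex.ofReal_injective
    rw [← h]
    push_cast
    simp
  rw [← h', Real.cosh_eq, Real.exp_neg]
  have := Real.exp_pos (Real.pi * α / 4)
  set y := Real.exp (Real.pi * α / 4)
  have : 1 - -y⁻¹ ^ 2 ≠ 0 := by
    have : 0 < 1 - -y⁻¹ ^ 2 := by rw [sub_neg_eq_add]; positivity
    exact this.ne'
  have : y ^ 2 + 1 ≠ 0 := by positivity
  rw [sub_neg_eq_add]
  field_simp
  ring

theorem multiplier_kernel :
    Integrable m ∧
      ∀ α : ℝ, (1 / (2 * Real.pi)) * ∫ ξ : ℝ, m ξ * Real.cos (α * ξ) =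
        (Real.pi / 8) * (1 / Real.cosh (Real.pi * α / 4)) ^ 2 := by
  refine ⟨m_integrable, fun α => ?_⟩
  have key : ∫ ξ : ℝ, m ξ * Real.cos (α * ξ) =
      (Real.pi ^ 2 / 4) * (1 / Real.cosh (Real.pi * α / 4)) ^ 2 := by
    have hc : Continuous fun α : ℝ => (Real.pi ^ 2 / 4) * (1 / Real.cosh (Real.pi * α / 4)) ^ 2 := by
      have : ∀ α : ℝ, Real.cosh (Real.pi * α / 4) ≠ 0 := fun α => (Real.cosh_pos _).ne'
      fun_prop (disch := assumption)
    have hd : Dense {x : ℝ | x ≠ 0} := dense_compl_singleton 0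
    have := Continuous.ext_on hd cont_lhs hc (fun x hx => ?_)
    · exact congrFun this α
    · rcases lt_or_gt_of_ne (show x ≠ 0 from hx) with h | h
      · have := pos_case (-x) (by linarith)
        simpa [neg_div] using this
      · exact pos_case x h
  rw [key]
  field_simp
  norm_num
end

section
/- For all real ξ, η with ξ ≠ 0, η ≠ 0 and ξ ≠ η, define I(ξ,η) = ξ(1 + coth ξ)(1 + coth(η − ξ)) + η(1 + coth η)(1 + coth(ξ − η)). Then (1/2)·(I(ξ,η) + I(−ξ,−η)) = ξ·coth ξ + η·coth η − (ξ − η)·coth(ξ − η). -/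
/-- The real hyperbolic cotangent. -/
noncomputable def coth (x : ℝ) : ℝ := Real.cosh x / Real.sinh x

noncomputable def Ifun (ξ η : ℝ) : ℝ :=
  ξ * (1 + coth ξ) * (1 + coth (η - ξ)) + η * (1 + coth η) * (1 + coth (ξ - η))

/-- Symmetrization identity for the sum-of-squares part of the Taylor
stability kernel. -/
theorem Ifun_symmetrization (ξ η : ℝ) (hξ : ξ ≠ 0) (hη : η ≠ 0) (hne : ξ ≠ η) :
    (1 / 2) * (Ifun ξ η + Ifun (-ξ) (-η)) =
      ξ * coth ξ + η * coth η - (ξ - η) * coth (ξ - η) := by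
  have hodd : ∀ x : ℝ, coth (-x) = -coth x := by
    intro x
    simp [coth, div_neg]
  have h1 : coth (η - ξ) = -coth (ξ - η) := by
    rw [← hodd, neg_sub]
  have h2 : coth (-η - -ξ) = coth (ξ - η) := by
    congr 1
    ring
  have h3 : coth (-ξ - -η) = -coth (ξ - η) := by
    rw [← hodd]
    congr 1
    ring
  unfold Ifun
  rw [h1, h2, h3, hodd, hodd]
  ring
end

section
/- Define K(ξ,η) = −(1/2)·((ξ + η) + (ξ − η)·tanh(ξ − η)) and K₁(ξ,η) = (1 − tanh ξ)(1 − tanh η)·K(ξ,η). Then for all real ξ ≠ 0 and η ≠ 0 one has (1/2)·(K₁(ξ,η) + K₁(−ξ,−η)) = tanh ξ·tanh η·( ξ/tanh ξ + η/tanh η − (ξ − η)·tanh(ξ − η) ). -/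
noncomputable def K (ξ η : ℝ) : ℝ :=
  -(1 / 2) * ((ξ + η) + (ξ - η) * Real.tanh (ξ - η))

noncomputable def K₁ (ξ η : ℝ) : ℝ :=
  (1 - Real.tanh ξ) * (1 - Real.tanh η) * K ξ η

/-- Symmetrization of the pressure kernel `K₁` in the proof of the Taylor sign
condition for finite-depth gravity water waves. -/
theorem K1_symmetrization (ξ η : ℝ) (hξ : ξ ≠ 0) (hη : η ≠ 0) :
    (1 / 2) * (K₁ ξ η + K₁ (-ξ) (-η)) =
      Real.tanh ξ * Real.tanh η *
        (ξ / Real.tanh ξ + η / Real.tanh η - (ξ - η) * Real.tanh (ξ - η)) := by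
  have ha : Real.tanh ξ ≠ 0 := by
    rw [Real.tanh_eq_sinh_div_cosh]
    exact div_ne_zero (by simpa using hξ) (Real.cosh_pos ξ).ne'
  have hb : Real.tanh η ≠ 0 := by
    rw [Real.tanh_eq_sinh_div_cosh]
    exact div_ne_zero (by simpa using hη) (Real.cosh_pos η).ne'
  have ht : Real.tanh (ξ - η) * (1 - Real.tanh ξ * Real.tanh η)
      = Real.tanh ξ - Real.tanh η := by
    have h1 := (Real.cosh_pos ξ).ne'
    have h2 := (Real.cosh_pos η).ne'
    have h3 := (Real.cosh_pos (ξ - η)).ne'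
    simp only [Real.tanh_eq_sinh_div_cosh]
    rw [Real.cosh_sub, mul_comm (Real.cosh ξ)] at h3
    rw [Real.sinh_sub, Real.cosh_sub]
    field_simp
  have hneg : Real.tanh (-ξ - -η) = -Real.tanh (ξ - η) := by
    rw [← Real.tanh_neg]; congr 1; ring
  have hR : Real.tanh ξ * Real.tanh η *
        (ξ / Real.tanh ξ + η / Real.tanh η - (ξ - η) * Real.tanh (ξ - η))
      = ξ * Real.tanh η + η * Real.tanh ξ
        - Real.tanh ξ * Real.tanh η * ((ξ - η) * Real.tanh (ξ - η)) := by
    field_simp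
  rw [hR]
  unfold K₁ K
  rw [hneg, Real.tanh_neg, Real.tanh_neg]
  linear_combination (-(ξ - η) / 2) * ht
end

section
/- Let f : ℝ → ℂ be a Schwartz function and let f̂(ξ) = (2π)^{−1/2}·∫_ℝ f(α)e^{−iαξ} dα be its Fourier transform. Define u(α,β) = (2π)^{−1/2}·∫_ℝ (cosh((β+1)ξ)/cosh ξ)·f̂(ξ)·e^{iαξ} dξ for (α,β) ∈ ℝ × [−1,0]. Then this integral converges absolutely, u is smooth on ℝ × [−1,0], u satisfies the Laplace equation ∂²u/∂α² + ∂²u/∂β² = 0 on ℝ × (−1,0), u(α,0) = f(α) for all α, and ∂u/∂β(α,−1) = 0 for all α. -/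
open MeasureTheory

/-- The Fourier transform `f̂(ξ) = (2π)^{−1/2} ∫ f(α) e^{−iαξ} dα`. -/
noncomputable def FT (f : ℝ → ℂ) (ξ : ℝ) : ℂ :=
  ((2 * Real.pi) ^ (-(1 : ℝ) / 2) : ℝ) •
    ∫ α : ℝ, f α * Complex.exp (-(Complex.I * α * ξ))

/-- The closed vertical strip `|Re z| ≤ 1`. -/
def stripT : Set ℂ := {z | |z.re| ≤ 1}

/-- Laplace-type transform with weight `1 / cosh`. -/
noncomputable def stripW (g : ℝ → ℂ) (z : ℂ) : ℂ :=
  ∫ ξ : ℝ, Complex.exp (z * ξ) * (((Real.cosh ξ)⁻¹ : ℝ) : ℂ) * g ξ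

/-- All moments are integrable. -/
def stripGood (g : ℝ → ℂ) : Prop := ∀ k : ℕ, Integrable (fun ξ : ℝ => (ξ : ℂ) ^ k * g ξ)

theorem stripGood.mul {g : ℝ → ℂ} (hg : stripGood g) : stripGood (fun ξ => (ξ : ℂ) * g ξ) := by
  intro k
  refine (hg (k + 1)).congr (Filter.Eventually.of_forall fun ξ => ?_)
  simp only [pow_succ]; ring

theorem stripGood.int {g : ℝ → ℂ} (hg : stripGood g) : Integrable g := by
  simpa using hg 0

theorem strip_exp_le {z : ℂ} (hz : z ∈ stripT) (ξ : ℝ) :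
    ‖Complex.exp (z * ξ)‖ ≤ 2 * Real.cosh ξ := by
  rw [Complex.norm_exp]
  have h1 : (z * ξ).re ≤ |ξ| := by
    have : (z * ξ).re = z.re * ξ := by simp
    rw [this]
    calc z.re * ξ ≤ |z.re * ξ| := le_abs_self _
      _ = |z.re| * |ξ| := abs_mul _ _
      _ ≤ 1 * |ξ| := mul_le_mul_of_nonneg_right hz (abs_nonneg _)
      _ = |ξ| := one_mul _
  calc Real.exp (z * ξ).re ≤ Real.exp |ξ| := Real.exp_le_exp.2 h1
    _ ≤ 2 * Real.cosh |ξ| := by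
      rw [Real.cosh_eq]; have := Real.exp_pos (-|ξ|); linarith
    _ = 2 * Real.cosh ξ := by rw [Real.cosh_abs]

theorem strip_ker_le {z : ℂ} (hz : z ∈ stripT) (ξ : ℝ) :
    ‖Complex.exp (z * ξ) * (((Real.cosh ξ)⁻¹ : ℝ) : ℂ)‖ ≤ 2 := by
  rw [norm_mul, Complex.norm_real, Real.norm_of_nonneg (inv_nonneg.2 (Real.cosh_pos ξ).le)]
  rw [← div_eq_mul_inv, div_le_iff₀ (Real.cosh_pos ξ)]
  exact strip_exp_le hz ξ

theorem strip_ker_cont (z : ℂ) :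
    Continuous (fun ξ : ℝ => Complex.exp (z * ξ) * (((Real.cosh ξ)⁻¹ : ℝ) : ℂ)) := by
  have : Continuous (fun ξ : ℝ => (Real.cosh ξ)⁻¹) :=
    Real.continuous_cosh.inv₀ (fun ξ => (Real.cosh_pos ξ).ne')
  fun_prop

theorem strip_integrable {g : ℝ → ℂ} (hg : Integrable g) {z : ℂ} (hz : z ∈ stripT) :
    Integrable (fun ξ : ℝ => Complex.exp (z * ξ) * (((Real.cosh ξ)⁻¹ : ℝ) : ℂ) * g ξ) :=
  hg.bdd_mul (strip_ker_cont z).aestronglyMeasurable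
    (Filter.Eventually.of_forall (strip_ker_le hz))

theorem stripT_convex : Convex ℝ stripT := by
  have : stripT = Complex.reLm ⁻¹' (Set.Icc (-1) 1) := by
    ext z; simp [stripT, abs_le]
  rw [this]
  exact (convex_Icc _ _).linear_preimage _

theorem strip_lip {z w : ℂ} (hz : z ∈ stripT) (hw : w ∈ stripT) (ξ : ℝ) :
    ‖Complex.exp (w * ξ) - Complex.exp (z * ξ)‖ ≤ (2 * Real.cosh ξ * |ξ|) * ‖w - z‖ := by
  refine Convex.norm_image_sub_le_of_norm_hasDerivWithin_le
    (f := fun z : ℂ => Complex.exp (z * ξ)) (f' := fun z : ℂ => Complex.exp (z * ξ) * ξ)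
    (s := stripT) ?_ ?_ stripT_convex hz hw
  · intro x _
    have := ((hasDerivAt_id x).mul_const (ξ : ℂ)).cexp
    simpa using this.hasDerivWithinAt
  · intro x hx
    rw [norm_mul, Complex.norm_real, Real.norm_eq_abs]
    exact mul_le_mul_of_nonneg_right (strip_exp_le hx ξ) (abs_nonneg _)

theorem stripW_hasDeriv {g : ℝ → ℂ} (hg : stripGood g) {z : ℂ} (hz : z ∈ stripT) :
    HasDerivWithinAt (stripW g) (stripW (fun ξ => (ξ : ℂ) * g ξ) z) stripT z := by
  rw [hasDerivWithinAt_iff_tendsto_slope]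
  have key : Filter.Tendsto (fun w => ∫ ξ : ℝ, (w - z)⁻¹ *
      (Complex.exp (w * ξ) - Complex.exp (z * ξ)) * (((Real.cosh ξ)⁻¹ : ℝ) : ℂ) * g ξ)
      (nhdsWithin z (stripT \ {z})) (nhds (stripW (fun ξ => (ξ : ℂ) * g ξ) z)) := by
    refine tendsto_integral_filter_of_dominated_convergence (fun ξ => 2 * ‖(ξ : ℂ) * g ξ‖)
      ?_ ?_ ?_ ?_
    · refine Filter.Eventually.of_forall fun w => ?_
      have h := ((strip_ker_cont w).sub (strip_ker_cont z)).aestronglyMeasurable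
        (μ := volume)
      refine ((h.mul hg.int.aestronglyMeasurable).const_mul ((w - z)⁻¹)).congr
        (Filter.Eventually.of_forall fun ξ => ?_)
      simp only [Pi.mul_apply, Pi.sub_apply]; ring
    · filter_upwards [self_mem_nhdsWithin] with w hw
      refine Filter.Eventually.of_forall fun ξ => ?_
      have hne : 0 < ‖w - z‖ := norm_pos_iff.2 (sub_ne_zero.2 hw.2)
      have hc := Real.cosh_pos ξ
      simp only [norm_mul, norm_inv, Complex.norm_real, Real.norm_eq_abs, abs_inv, abs_of_pos hc]
      have := strip_lip hz hw.1 ξ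
      have h2 : ‖w - z‖⁻¹ * ‖Complex.exp (w * ξ) - Complex.exp (z * ξ)‖ * (Real.cosh ξ)⁻¹
          ≤ 2 * |ξ| := by
        rw [← div_eq_mul_inv, div_le_iff₀ hc, ← div_eq_inv_mul, div_le_iff₀ hne]
        linarith
      calc _ ≤ (2 * |ξ|) * ‖g ξ‖ := mul_le_mul_of_nonneg_right h2 (norm_nonneg _)
        _ = _ := by ring
    · have := (hg 1).norm.const_mul 2
      simpa using this
    · refine Filter.Eventually.of_forall fun ξ => ?_
      have h : HasDerivAt (fun w : ℂ => Complex.exp (w * ξ)) (Complex.exp (z * ξ) * ξ) z := by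
        simpa using ((hasDerivAt_id z).mul_const (ξ : ℂ)).cexp
      have h' := (hasDerivWithinAt_iff_tendsto_slope.1 (h.hasDerivWithinAt (s := stripT)))
      have h'' := (h'.mul_const (((Real.cosh ξ)⁻¹ : ℝ) : ℂ)).mul_const (g ξ)
      refine (h''.congr fun w => ?_).trans (le_of_eq ?_)
      · simp only [slope_def_field]; ring
      · congr 1; ring
  refine key.congr' ?_
  filter_upwards [self_mem_nhdsWithin] with w hw
  rw [slope_def_field, stripW, stripW, ← integral_sub (strip_integrable hg.int hw.1)
    (strip_integrable hg.int hz), div_eq_inv_mul, ← integral_const_mul]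
  congr 1; ext ξ; ring

theorem stripW_contDiff (n : ℕ) : ∀ {g : ℝ → ℂ}, stripGood g →
    ContDiffOn ℝ n (stripW g) stripT := by
  induction n with
  | zero =>
    intro g hg
    rw [Nat.cast_zero, contDiffOn_zero]
    exact fun z hz => (stripW_hasDeriv hg hz).continuousWithinAt
  | succ n ih =>
    intro g hg z hz
    rw [Nat.cast_succ, contDiffWithinAt_succ_iff_hasFDerivWithinAt (by simp)]
    refine ⟨stripT, by simpa [hz] using self_mem_nhdsWithin, by simp, 
      fun w => (ContinuousLinearMap.mul ℝ ℂ) (stripW (fun ξ => (ξ : ℂ) * g ξ) w), ?_, ?_⟩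
    · intro w hw
      have := (stripW_hasDeriv hg hw).hasFDerivWithinAt.restrictScalars ℝ
      convert this using 1
      ext <;> simp [mul_comm]
    · exact (ContinuousLinearMap.contDiff _).comp_contDiffWithinAt (ih hg.mul z hz)

theorem stripW_hasDerivAt {g : ℝ → ℂ} (hg : stripGood g) {z : ℂ} (hz : |z.re| < 1) :
    HasDerivAt (stripW g) (stripW (fun ξ => (ξ : ℂ) * g ξ) z) z := by
  refine (stripW_hasDeriv hg (le_of_lt hz : z ∈ stripT)).hasDerivAt ?_
  have : IsOpen {z : ℂ | |z.re| < 1} := isOpen_lt (by fun_prop) continuous_const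
  exact Filter.mem_of_superset (this.mem_nhds hz) fun w hw => (le_of_lt (show |w.re| < 1 from hw) : |w.re| ≤ 1)

theorem FT_eq (f : SchwartzMap ℝ ℂ) (ξ : ℝ) :
    FT (⇑f) ξ = ((2 * Real.pi) ^ (-(1 : ℝ) / 2) : ℝ) •
      (FourierTransform.fourier f : SchwartzMap ℝ ℂ) ((2 * Real.pi)⁻¹ * ξ) := by
  rw [FT, SchwartzMap.fourier_coe, Real.fourier_eq']
  congr 2
  ext v
  rw [smul_eq_mul, mul_comm]
  congr 2
  have : (Real.pi : ℂ) ≠ 0 := by exact_mod_cast Real.pi_ne_zero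
  simp
  field_simp

theorem FT_good (f : SchwartzMap ℝ ℂ) : stripGood (FT (⇑f)) := by
  intro k
  set F : SchwartzMap ℝ ℂ := FourierTransform.fourier f
  have h : Integrable (fun x : ℝ => (x : ℂ) ^ k * F x) := by
    refine (F.integrable_pow_mul volume k).mono' ?_ ?_
    · exact (Continuous.mul (by fun_prop) F.continuous).aestronglyMeasurable
    · exact Filter.Eventually.of_forall fun x => by simp
  have hp : (2 * Real.pi)⁻¹ ≠ 0 := by positivity
  have h2 := ((h.comp_mul_left' hp).const_mul ((2 * Real.pi : ℂ) ^ k)).const_mul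
    ((((2 * Real.pi) ^ (-(1 : ℝ) / 2) : ℝ) : ℂ))
  refine h2.congr (Filter.Eventually.of_forall fun ξ => ?_)
  have : (Real.pi : ℂ) ≠ 0 := by exact_mod_cast Real.pi_ne_zero
  simp only [FT_eq, Complex.real_smul]
  have e : (2 * (Real.pi : ℂ)) ^ k * (((2 * Real.pi)⁻¹ * ξ : ℝ) : ℂ) ^ k = (ξ : ℂ) ^ k := by
    rw [← mul_pow]
    congr 1
    push_cast
    field_simp
  rw [← e]
  ring

theorem FT_inv (f : SchwartzMap ℝ ℂ) (α : ℝ) :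
    ((2 * Real.pi) ^ (-(1 : ℝ) / 2) : ℝ) •
      ∫ ξ : ℝ, FT (⇑f) ξ * Complex.exp (Complex.I * α * ξ) = f α := by
  set F : SchwartzMap ℝ ℂ := FourierTransform.fourier f with hF
  have hc : ((2 * Real.pi) ^ (-(1 : ℝ) / 2) : ℝ) * ((2 * Real.pi) ^ (-(1 : ℝ) / 2) : ℝ)
      = (2 * Real.pi)⁻¹ := by
    rw [← Real.rpow_add (by positivity), ← Real.rpow_neg_one]; norm_num
  have h1 : ∀ ξ : ℝ, FT (⇑f) ξ * Complex.exp (Complex.I * α * ξ) =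
      ((2 * Real.pi) ^ (-(1 : ℝ) / 2) : ℝ) • (fun x : ℝ => F x *
        Complex.exp (2 * Real.pi * Complex.I * α * x)) ((2 * Real.pi)⁻¹ * ξ) := by
    intro ξ
    have : (Real.pi : ℂ) ≠ 0 := by exact_mod_cast Real.pi_ne_zero
    rw [FT_eq, smul_mul_assoc]
    congr 3
    push_cast
    field_simp
  simp_rw [h1]
  rw [integral_smul, smul_smul, hc, Measure.integral_comp_mul_left (fun x : ℝ => F x *
        Complex.exp (2 * Real.pi * Complex.I * α * x)), smul_smul]
  have h2 : (2 * Real.pi)⁻¹ * |((2 * Real.pi)⁻¹)⁻¹| = 1 := by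
    have : 0 < Real.pi := Real.pi_pos
    rw [inv_inv, abs_of_pos (by positivity)]; field_simp
  rw [h2, one_smul]
  have h3 : (FourierTransformInv.fourierInv F : SchwartzMap ℝ ℂ) = f := by
    simp [hF]
  conv_rhs => rw [← h3]
  rw [SchwartzMap.fourierInv_coe, Real.fourierInv_eq']
  congr 1; ext v
  rw [smul_eq_mul, mul_comm]
  congr 2
  simp
  ring

theorem strip_integrand (g : ℝ → ℂ) (α β ξ : ℝ) :
    ((Real.cosh ((β + 1) * ξ) / Real.cosh ξ : ℝ) : ℂ) * g ξ * Complex.exp (Complex.I * α * ξ) =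
     (1 / 2) * (Complex.exp ((Complex.I * α + (β + 1)) * ξ) * (((Real.cosh ξ)⁻¹ : ℝ) : ℂ) * g ξ
      + Complex.exp ((Complex.I * α - (β + 1)) * ξ) * (((Real.cosh ξ)⁻¹ : ℝ) : ℂ) * g ξ) := by
  rw [add_mul (Complex.I * (α : ℂ)), sub_mul (Complex.I * (α : ℂ)), Complex.exp_add,
    sub_eq_add_neg, Complex.exp_add]
  push_cast
  rw [Complex.cosh.eq_def (((β : ℂ) + 1) * ξ)]
  ring

theorem strip_mem (α : ℝ) {β : ℝ} (hβ : β ∈ Set.Icc (-1 : ℝ) 0) :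
    Complex.I * α + (β + 1) ∈ stripT ∧ Complex.I * α - (β + 1) ∈ stripT := by
  obtain ⟨h1, h2⟩ := hβ
  constructor <;> simp only [stripT, Set.mem_ofPred_eq, abs_le] <;> simp <;> constructor <;> linarith

theorem strip_mem' (α : ℝ) {β : ℝ} (hβ : β ∈ Set.Ioo (-1 : ℝ) 0) :
    |(Complex.I * α + (β + 1)).re| < 1 ∧ |(Complex.I * α - (β + 1)).re| < 1 := by
  obtain ⟨h1, h2⟩ := hβ
  constructor <;> simp only [abs_lt] <;> simp <;> constructor <;> linarith

/-- The solution as a sum of a holomorphic and an antiholomorphic function. -/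
noncomputable def stripU (s : ℂ) (g : ℝ → ℂ) (α β : ℝ) : ℂ :=
  stripW g (Complex.I * α + (β + 1)) + s * stripW g (Complex.I * α - (β + 1))

theorem stripU_dx (s : ℂ) {g : ℝ → ℂ} (hg : stripGood g) (α : ℝ) {β : ℝ}
    (hβ : β ∈ Set.Ioo (-1 : ℝ) 0) :
    HasDerivAt (fun x => stripU s g x β)
      (Complex.I * stripU s (fun ξ => (ξ : ℂ) * g ξ) α β) α := by
  obtain ⟨h1, h2⟩ := strip_mem' α hβ
  have e : HasDerivAt (fun x : ℝ => Complex.I * (x : ℂ)) Complex.I α := by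
    simpa using (Complex.ofRealCLM.hasDerivAt (x := α)).const_mul Complex.I
  have a := (stripW_hasDerivAt hg h1).comp α (e.add_const ((β : ℂ) + 1))
  have b := (stripW_hasDerivAt hg h2).comp α (e.sub_const ((β : ℂ) + 1))
  refine (a.add (b.const_mul s)).congr_deriv ?_
  simp only [stripU]; ring

theorem stripU_dy (s : ℂ) {g : ℝ → ℂ} (hg : stripGood g) (α : ℝ) {β : ℝ}
    (hβ : β ∈ Set.Ioo (-1 : ℝ) 0) :
    HasDerivAt (fun y => stripU s g α y)
      (stripU (-s) (fun ξ => (ξ : ℂ) * g ξ) α β) β := by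
  obtain ⟨h1, h2⟩ := strip_mem' α hβ
  have e : HasDerivAt (fun x : ℝ => (x : ℂ) + 1) 1 β := by
    simpa using (Complex.ofRealCLM.hasDerivAt (x := β)).add_const 1
  have a := (stripW_hasDerivAt hg h1).comp β (e.const_add (Complex.I * (α : ℂ)))
  have b := (stripW_hasDerivAt hg h2).comp β (e.const_sub (Complex.I * (α : ℂ)))
  refine (a.add (b.const_mul s)).congr_deriv ?_
  simp only [stripU]; ring

/-- The solution formula for the mixed boundary-value problem for the Laplacian
on the strip `ℝ × (−1,0)`: Dirichlet data `f` on top, homogeneous Neumann on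
the bottom. -/
theorem strip_laplace_solution (f : SchwartzMap ℝ ℂ) (u : ℝ → ℝ → ℂ)
    (hu : ∀ α β : ℝ, u α β =
      ((2 * Real.pi) ^ (-(1 : ℝ) / 2) : ℝ) •
        ∫ ξ : ℝ, ((Real.cosh ((β + 1) * ξ) / Real.cosh ξ : ℝ) : ℂ) * FT (⇑f) ξ *
          Complex.exp (Complex.I * α * ξ)) :
    (∀ α β : ℝ, β ∈ Set.Icc (-1 : ℝ) 0 →
        Integrable (fun ξ : ℝ =>
          ((Real.cosh ((β + 1) * ξ) / Real.cosh ξ : ℝ) : ℂ) * FT (⇑f) ξ *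
            Complex.exp (Complex.I * α * ξ))) ∧
      ContDiffOn ℝ (⊤ : ℕ∞) (fun p : ℝ × ℝ => u p.1 p.2)
        (Set.univ ×ˢ Set.Icc (-1 : ℝ) 0) ∧
      (∀ α β : ℝ, β ∈ Set.Ioo (-1 : ℝ) 0 →
        deriv (fun x => deriv (fun x' => u x' β) x) α +
          deriv (fun y => deriv (fun y' => u α y') y) β = 0) ∧
      (∀ α : ℝ, u α 0 = f α) ∧
      (∀ α : ℝ, deriv (fun y => u α y) (-1) = 0) := by
  set c : ℝ := (2 * Real.pi) ^ (-(1 : ℝ) / 2) with hc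
  have hg := FT_good f
  have hU : ∀ α β : ℝ, β ∈ Set.Icc (-1 : ℝ) 0 →
      u α β = ((c : ℂ) * (1 / 2)) * stripU 1 (FT (⇑f)) α β := by
    intro α β hβ
    obtain ⟨h1, h2⟩ := strip_mem α hβ
    rw [hu]
    simp_rw [strip_integrand]
    rw [integral_const_mul, integral_add (strip_integrable hg.int h1)
      (strip_integrable hg.int h2), stripU, stripW, stripW, Complex.real_smul]
    ring
  refine ⟨?_, ?_, ?_, ?_, ?_⟩
  · intro α β hβ
    obtain ⟨h1, h2⟩ := strip_mem α hβ
    simp_rw [strip_integrand]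
    exact ((strip_integrable hg.int h1).add (strip_integrable hg.int h2)).const_mul _
  · rw [contDiffOn_infty]
    intro n
    have key : ContDiffOn ℝ n (fun p : ℝ × ℝ =>
        ((c : ℂ) * (1 / 2)) * stripU 1 (FT (⇑f)) p.1 p.2) (Set.univ ×ˢ Set.Icc (-1 : ℝ) 0) := by
      have o1 : ContDiff ℝ n (fun p : ℝ × ℝ => (p.1 : ℂ)) :=
        Complex.ofRealCLM.contDiff.comp contDiff_fst
      have o2 : ContDiff ℝ n (fun p : ℝ × ℝ => (p.2 : ℂ)) :=
        Complex.ofRealCLM.contDiff.comp contDiff_snd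
      have a : ContDiffOn ℝ n (fun p : ℝ × ℝ => stripW (FT (⇑f))
          (Complex.I * p.1 + (p.2 + 1))) (Set.univ ×ˢ Set.Icc (-1 : ℝ) 0) :=
        (stripW_contDiff n hg).comp
          ((contDiff_const.mul o1).add (o2.add contDiff_const)).contDiffOn
          fun p hp => (strip_mem p.1 hp.2).1
      have b : ContDiffOn ℝ n (fun p : ℝ × ℝ => stripW (FT (⇑f))
          (Complex.I * p.1 - (p.2 + 1))) (Set.univ ×ˢ Set.Icc (-1 : ℝ) 0) :=
        (stripW_contDiff n hg).comp
          ((contDiff_const.mul o1).sub (o2.add contDiff_const)).contDiffOn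
          fun p hp => (strip_mem p.1 hp.2).2
      exact contDiffOn_const.mul (a.add (contDiffOn_const.mul b))
    exact key.congr fun p hp => hU p.1 p.2 hp.2
  · intro α β hβ
    have hx : (fun x => deriv (fun x' => u x' β) x) = fun x => ((c : ℂ) * (1 / 2)) *
        (Complex.I * stripU 1 (fun ξ => (ξ : ℂ) * FT (⇑f) ξ) x β) := by
      ext x
      have : (fun x' => u x' β) = fun x' => ((c : ℂ) * (1 / 2)) * stripU 1 (FT (⇑f)) x' β := by
        ext x'; exact hU x' β (Set.Ioo_subset_Icc_self hβ)
      rw [this]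
      exact ((stripU_dx 1 hg x hβ).const_mul _).deriv
    have hy1 : ∀ y ∈ Set.Ioo (-1 : ℝ) 0, deriv (fun y' => u α y') y = ((c : ℂ) * (1 / 2)) *
        (stripU (-1) (fun ξ => (ξ : ℂ) * FT (⇑f) ξ) α y) := by
      intro y hy
      refine HasDerivAt.deriv (((stripU_dy 1 hg α hy).const_mul _).congr_of_eventuallyEq ?_)
      filter_upwards [isOpen_Ioo.mem_nhds hy] with y' hy'
      exact hU α y' (Set.Ioo_subset_Icc_self hy')
    have hy2 := (((stripU_dy (-1) hg.mul α hβ).const_mul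
      ((c : ℂ) * (1 / 2))).congr_of_eventuallyEq (f₁ := fun y => deriv (fun y' => u α y') y) (by
        filter_upwards [isOpen_Ioo.mem_nhds hβ] with y' hy'
        exact hy1 y' hy')).deriv
    rw [hx, hy2, (((stripU_dx 1 hg.mul α hβ).const_mul Complex.I).const_mul _).deriv, neg_neg]
    have := Complex.I_mul_I
    linear_combination ((c : ℂ) * (1 / 2)) *
      (stripU 1 (fun ξ => (ξ : ℂ) * ((ξ : ℂ) * FT (⇑f) ξ)) α β) * this
  · intro α
    rw [hu, ← FT_inv f α]
    congr 2
    ext ξ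
    rw [zero_add, one_mul, div_self (Real.cosh_pos ξ).ne']
    simp
  · intro α
    have hsym : ∀ y, u α (-2 - y) = u α y := by
      intro y
      rw [hu, hu]
      have : ∀ ξ : ℝ, Real.cosh ((-2 - y + 1) * ξ) = Real.cosh ((y + 1) * ξ) := by
        intro ξ
        rw [← Real.cosh_neg]; congr 1; ring
      simp_rw [this]
    have h := deriv_comp_const_sub (f := fun y => u α y) (a := -2) (x := -1)
    simp only [hsym] at h
    norm_num at h
    have h2 : (2 : ℂ) * deriv (fun y => u α y) (-1) = 0 := by
      linear_combination h
    simpa using h2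
end

section
/- Let 𝒯 denote the Fourier multiplier with symbol −i·tanh ξ, i.e. for a Schwartz function f, 𝒯f is the Schwartz function with Fourier transform ξ ↦ −i·tanh(ξ)·f̂(ξ), where f̂(ξ) = (2π)^{−1/2}·∫_ℝ f(α)e^{−iαξ} dα. Then 𝒯 maps real-valued Schwartz functions to real-valued Schwartz functions, and for all real-valued Schwartz functions u and v one has the product formula u·𝒯v + (𝒯u)·v = 𝒯( u·v − (𝒯u)·(𝒯v) ). -/
open MeasureTheory

/-- `g` is the Tilbert transform of `f`, i.e. the Fourier multiplier with
symbol `−i tanh ξ` applied to `f`. -/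
def IsTilbert (f g : ℝ → ℂ) : Prop :=
  ∀ ξ : ℝ, FT g ξ = -Complex.I * (Real.tanh ξ : ℂ) * FT f ξ

open FourierTransform ComplexConjugate in
lemma FT_eq_fourier (f : ℝ → ℂ) (ξ : ℝ) :
    FT f ξ = ((2 * Real.pi) ^ (-(1 : ℝ) / 2) : ℝ) • 𝓕 f (ξ / (2 * Real.pi)) := by
  unfold FT
  congr 1
  rw [Real.fourier_real_eq_integral_exp_smul]
  congr 1
  ext α
  rw [smul_eq_mul, mul_comm]
  congr 2
  have : (Real.pi : ℂ) ≠ 0 := by exact_mod_cast Real.pi_ne_zero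
  push_cast
  field_simp

open FourierTransform in
lemma isTilbert_iff (f g : ℝ → ℂ) :
    IsTilbert f g ↔
      ∀ x : ℝ, 𝓕 g x = -Complex.I * (Real.tanh (2 * Real.pi * x) : ℂ) * 𝓕 f x := by
  have hpi : (2 * Real.pi) ≠ 0 := by positivity
  have hc : (((2 * Real.pi) ^ (-(1 : ℝ) / 2) : ℝ) : ℂ) ≠ 0 := by
    have : 0 < (2 * Real.pi) ^ (-(1 : ℝ) / 2) := by positivity
    exact_mod_cast this.ne'
  unfold IsTilbert
  constructor
  · intro h x
    have := h (2 * Real.pi * x)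
    rw [FT_eq_fourier, FT_eq_fourier, mul_div_cancel_left₀ _ hpi, Complex.real_smul,
      Complex.real_smul] at this
    apply mul_left_cancel₀ hc
    rw [this]; ring
  · intro h ξ
    rw [FT_eq_fourier, FT_eq_fourier, h, mul_div_cancel₀ _ hpi, Complex.real_smul,
      Complex.real_smul]
    ring

lemma hasDerivAt_tanh' (x : ℝ) : HasDerivAt Real.tanh (1 - Real.tanh x ^ 2) x := by
  have h := (Real.hasDerivAt_sinh x).div (Real.hasDerivAt_cosh x) (Real.cosh_pos x).ne'
  have e : (Real.sinh / Real.cosh) = Real.tanh := by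
    ext y; simp [Real.tanh_eq_sinh_div_cosh]
  rw [e] at h
  have h3 : (Real.cosh x * Real.cosh x - Real.sinh x * Real.sinh x) / Real.cosh x ^ 2
      = 1 - Real.tanh x ^ 2 := by
    rw [Real.tanh_eq_sinh_div_cosh]
    have := (Real.cosh_pos x).ne'
    field_simp
  rw [h3] at h
  exact h

lemma bdd_iteratedDeriv_poly_tanh (n : ℕ) : ∀ p : Polynomial ℝ,
    ∃ C : ℝ, ∀ x, ‖iteratedDeriv n (fun x => p.eval (Real.tanh x)) x‖ ≤ C := by
  induction n with
  | zero =>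
    intro p
    obtain ⟨C, hC⟩ := (isCompact_Icc (a := (-1 : ℝ)) (b := 1)).exists_bound_of_continuousOn
      (f := fun t => p.eval t) p.continuous.continuousOn
    refine ⟨C, fun x => ?_⟩
    rw [iteratedDeriv_zero]
    exact hC _ ⟨(Real.neg_one_lt_tanh x).le, (Real.tanh_lt_one x).le⟩
  | succ n ih =>
    intro p
    obtain ⟨C, hC⟩ := ih (p.derivative * (1 - Polynomial.X ^ 2))
    refine ⟨C, fun x => ?_⟩
    rw [iteratedDeriv_succ']
    have e : deriv (fun x => p.eval (Real.tanh x)) =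
        fun x => (p.derivative * (1 - Polynomial.X ^ 2)).eval (Real.tanh x) := by
      ext y
      have := (p.hasDerivAt (Real.tanh y)).comp y (hasDerivAt_tanh' y)
      rw [show (fun x => p.eval (Real.tanh x)) = (fun t => p.eval t) ∘ Real.tanh from rfl,
        this.deriv]
      simp
    rw [e]
    exact hC x

lemma hasTemperateGrowth_tanh : Real.tanh.HasTemperateGrowth := by
  refine ⟨?_, fun n => ?_⟩
  · have e : Real.tanh = fun y => Real.sinh y / Real.cosh y := by
      ext y; exact Real.tanh_eq_sinh_div_cosh y
    rw [e]
    exact Real.contDiff_sinh.div Real.contDiff_cosh (fun x => (Real.cosh_pos x).ne')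
  · obtain ⟨C, hC⟩ := bdd_iteratedDeriv_poly_tanh n Polynomial.X
    refine ⟨0, C, fun x => ?_⟩
    rw [norm_iteratedFDeriv_eq_norm_iteratedDeriv]
    simpa using hC x

lemma hasTemperateGrowth_symbol :
    (fun x : ℝ => -Complex.I * (Real.tanh (2 * Real.pi * x) : ℂ)).HasTemperateGrowth := by
  have h1 : (fun x : ℝ => 2 * Real.pi * x).HasTemperateGrowth := by fun_prop
  have h2 := Function.HasTemperateGrowth.comp (g := Complex.ofReal) (by fun_prop) (hasTemperateGrowth_tanh.comp h1)
  exact (Function.HasTemperateGrowth.const (-Complex.I)).mul h2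

open FourierTransform ComplexConjugate in
lemma fourier_conj_neg (f : ℝ → ℂ) (hf : ∀ α, (f α).im = 0) (x : ℝ) :
    𝓕 f (-x) = conj (𝓕 f x) := by
  rw [Real.fourier_real_eq_integral_exp_smul, Real.fourier_real_eq_integral_exp_smul,
    ← integral_conj]
  congr 1
  ext α
  rw [smul_eq_mul, smul_eq_mul, map_mul, Complex.conj_eq_iff_im.2 (hf α), ← Complex.exp_conj]
  congr 2
  simp [Complex.conj_ofNat]

open FourierTransform ComplexConjugate in
lemma fourierInv_real (F : ℝ → ℂ) (hF : ∀ x, F (-x) = conj (F x)) (a : ℝ) :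
    (𝓕⁻ F a).im = 0 := by
  rw [← Complex.conj_eq_iff_im, Real.fourierInv_eq_fourier_neg,
    Real.fourier_real_eq_integral_exp_smul, ← integral_conj,
    ← integral_neg_eq_self (fun v : ℝ => Complex.exp _ • F v)]
  congr 1
  ext α
  rw [smul_eq_mul, smul_eq_mul, map_mul, ← hF, ← Complex.exp_conj]
  congr 2
  simp [Complex.conj_ofNat]

open FourierTransform in
lemma fourier_mul_eq (a b : SchwartzMap ℝ ℂ) (x : ℝ) :
    𝓕 (fun α => a α * b α) x = ∫ y, 𝓕 a y * 𝓕 b (x - y) := by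
  set c := SchwartzMap.convolution (ContinuousLinearMap.mul ℂ ℂ) (𝓕 a) (𝓕 b) with hc
  have h1 : c x = ∫ y, 𝓕 a y * 𝓕 b (x - y) := by
    rw [hc, SchwartzMap.convolution_apply]
    rfl
  have key (s : SchwartzMap ℝ ℂ) (z : ℝ) : 𝓕 (𝓕 s) z = s (-z) := by
    have : 𝓕⁻ (𝓕 s) (-z) = s (-z) := by simp
    rw [← this, SchwartzMap.fourierInv_coe, Real.fourierInv_eq_fourier_neg, neg_neg]
    rfl
  have h2 : 𝓕⁻ c = SchwartzMap.pairing (ContinuousLinearMap.mul ℂ ℂ) a b := by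
    ext z
    rw [SchwartzMap.fourierInv_coe, Real.fourierInv_eq_fourier_neg, ← SchwartzMap.fourier_coe,
      hc, SchwartzMap.fourier_convolution]
    simp [key]
  have h3 : c = 𝓕 (SchwartzMap.pairing (ContinuousLinearMap.mul ℂ ℂ) a b) := by
    rw [← h2]; simp
  rw [← h1, h3]
  rfl

open FourierTransform in
lemma integrable_conv (a b : SchwartzMap ℝ ℂ) (x : ℝ) :
    Integrable (fun y => a y * b (x - y)) := by
  refine a.integrable.mul_bdd (c := SchwartzMap.seminorm ℝ 0 0 b) ?_ ?_
  · exact (b.continuous.comp (by fun_prop)).aestronglyMeasurable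
  · exact Filter.Eventually.of_forall fun y => SchwartzMap.norm_le_seminorm ℝ b _

lemma tanh_add_law (x y : ℝ) :
    Real.tanh y + Real.tanh (x - y) =
      Real.tanh x * (1 + Real.tanh y * Real.tanh (x - y)) := by
  obtain ⟨z, rfl⟩ : ∃ z, x = y + z := ⟨x - y, by ring⟩
  rw [add_sub_cancel_left]
  simp only [Real.tanh_eq_sinh_div_cosh, Real.sinh_add]
  have h1 := (Real.cosh_pos y).ne'
  have h2 := (Real.cosh_pos z).ne'
  have h3 := (Real.cosh_pos (y + z)).ne'
  field_simp
  rw [Real.cosh_add]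

/-- The Tilbert transform maps real-valued Schwartz functions to real-valued
Schwartz functions, and satisfies the product formula
`u 𝒯v + (𝒯u) v = 𝒯(uv − (𝒯u)(𝒯v))`. -/
theorem tilbert_real_and_product_formula :
    (∀ f : SchwartzMap ℝ ℂ, (∀ α : ℝ, (f α).im = 0) →
      ∃ Tf : SchwartzMap ℝ ℂ, IsTilbert (⇑f) (⇑Tf) ∧ ∀ α : ℝ, (Tf α).im = 0) ∧
    (∀ u v Tu Tv P : SchwartzMap ℝ ℂ,
      (∀ α : ℝ, (u α).im = 0) → (∀ α : ℝ, (v α).im = 0) →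
      IsTilbert (⇑u) (⇑Tu) → IsTilbert (⇑v) (⇑Tv) →
      IsTilbert (fun α => u α * v α - Tu α * Tv α) (⇑P) →
      ∀ α : ℝ, u α * Tv α + Tu α * v α = P α) := by
  constructor
  · intro f hf
    refine ⟨SchwartzMap.fourierMultiplierCLM ℂ
      (fun x : ℝ => -Complex.I * (Real.tanh (2 * Real.pi * x) : ℂ)) f, ?_, ?_⟩
    · rw [isTilbert_iff]
      intro x
      rw [← SchwartzMap.fourier_coe, SchwartzMap.fourierMultiplierCLM_apply,
        FourierTransform.fourier_fourierInv_eq,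
        SchwartzMap.smulLeftCLM_apply_apply hasTemperateGrowth_symbol]
      rfl
    · intro α
      rw [SchwartzMap.fourierMultiplierCLM_apply, SchwartzMap.fourierInv_coe]
      apply fourierInv_real
      intro x
      rw [SchwartzMap.smulLeftCLM_apply_apply hasTemperateGrowth_symbol,
        SchwartzMap.smulLeftCLM_apply_apply hasTemperateGrowth_symbol, SchwartzMap.fourier_coe,
        fourier_conj_neg f hf, smul_eq_mul, smul_eq_mul, map_mul, map_mul, Complex.conj_ofReal,
        map_neg, Complex.conj_I, mul_neg, Real.tanh_neg]
      push_cast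
      ring
  · intro u v Tu Tv P _ _ hu hv hP
    rw [isTilbert_iff] at hu hv hP
    let M := ContinuousLinearMap.mul ℂ ℂ
    let L : SchwartzMap ℝ ℂ := SchwartzMap.pairing M u Tv + SchwartzMap.pairing M Tu v
    have split_add (a b c d : SchwartzMap ℝ ℂ) (x : ℝ) :
        FourierTransform.fourier (fun α => a α * b α + c α * d α) x =
          FourierTransform.fourier (fun α => a α * b α) x +
          FourierTransform.fourier (fun α => c α * d α) x := by
      have := FourierTransform.fourier_add (SchwartzMap.pairing M a b) (SchwartzMap.pairing M c d)
      exact DFunLike.congr_fun this x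
    have split_sub (a b c d : SchwartzMap ℝ ℂ) (x : ℝ) :
        FourierTransform.fourier (fun α => a α * b α - c α * d α) x =
          FourierTransform.fourier (fun α => a α * b α) x -
          FourierTransform.fourier (fun α => c α * d α) x := by
      have := (FourierTransform.fourierCLM ℂ (SchwartzMap ℝ ℂ)).map_sub
        (SchwartzMap.pairing M a b) (SchwartzMap.pairing M c d)
      exact DFunLike.congr_fun this x
    have hLP : FourierTransform.fourier L = FourierTransform.fourier P := by
      ext x
      have e1 : FourierTransform.fourier L x =
        FourierTransform.fourier (fun α => u α * Tv α + Tu α * v α) x := rfl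
      rw [e1, SchwartzMap.fourier_coe P, hP, split_add, split_sub]
      simp only [fourier_mul_eq]
      rw [← integral_add (integrable_conv _ _ x) (integrable_conv _ _ x),
        ← integral_sub (integrable_conv _ _ x) (integrable_conv _ _ x), ← integral_const_mul]
      congr 1
      ext y
      simp only [SchwartzMap.fourier_coe, hu, hv]
      have t := congrArg (fun r : ℝ => (r : ℂ))
        (tanh_add_law (2 * Real.pi * x) (2 * Real.pi * y))
      rw [← mul_sub] at t
      simp only [Complex.ofReal_add, Complex.ofReal_mul (Real.tanh _),
        Complex.ofReal_one] at t
      linear_combination (-Complex.I * FourierTransform.fourier (⇑u) y *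
        FourierTransform.fourier (⇑v) (x - y)) * t -
        (Complex.I * (Real.tanh (2 * Real.pi * x) : ℂ) * (Real.tanh (2 * Real.pi * y) : ℂ) *
          (Real.tanh (2 * Real.pi * (x - y)) : ℂ) * FourierTransform.fourier (⇑u) y *
        FourierTransform.fourier (⇑v) (x - y)) * Complex.I_sq
    have hL : L = P := by
      have := congrArg FourierTransformInv.fourierInv hLP
      simpa using this
    intro α
    exact DFunLike.congr_fun hL α
end

section
/- Let J(x) = x·tanh x, let ξ, η be real with ξ ≠ 0, η ≠ 0, ξ + η ≠ 0, set ζ = −(ξ + η) and Ω = J(ξ)² + J(η)² + J(ζ)² − 2J(ξ)J(η) − 2J(η)J(ζ) − 2J(ζ)J(ξ) (which is nonzero), and define A^h(ξ,η) = 2iη·J(ξ)·(J(ζ) − J(ξ) + J(η))/Ω, B^h(ξ,η) = −2iζ·J(ξ)·J(η)/Ω, C^h(ξ,η) = −iξηζ·(J(ζ) − J(ξ) − J(η))/Ω. Then: (1) (ξ+η)·A^h(ξ,η) − 2η·B^h(ξ,η) − 2·tanh ξ·C^h(ξ,η) = 0; (2) −(1/2)(ξ·A^h(ξ,η) + η·A^h(η,ξ))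 + tanh(ξ+η)·C^h(ξ,η) = iξη; and (3) −(1/2)(tanh η·A^h(ξ,η) + tanh ξ·A^h(η,ξ)) + tanh(ξ+η)·B^h(ξ,η) = 0. -/
noncomputable def Ah (ξ η : ℝ) : ℂ :=
  2 * Complex.I * (η : ℂ) * (J ξ : ℂ) * ((J (-(ξ + η)) - J ξ + J η : ℝ) : ℂ) /
    ((Ω ξ η (-(ξ + η)) : ℝ) : ℂ)

noncomputable def Bh (ξ η : ℝ) : ℂ :=
  -2 * Complex.I * ((-(ξ + η) : ℝ) : ℂ) * (J ξ : ℂ) * (J η : ℂ) /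
    ((Ω ξ η (-(ξ + η)) : ℝ) : ℂ)

noncomputable def Ch (ξ η : ℝ) : ℂ :=
  -Complex.I * (ξ : ℂ) * (η : ℂ) * ((-(ξ + η) : ℝ) : ℂ) *
      ((J (-(ξ + η)) - J ξ - J η : ℝ) : ℂ) /
    ((Ω ξ η (-(ξ + η)) : ℝ) : ℂ)

lemma sinh_convex : StrictConvexOn ℝ (Set.Ici (0:ℝ)) Real.sinh := by
  apply strictConvexOn_of_deriv2_pos (convex_Ici 0) Real.continuous_sinh.continuousOn
  intro x hx
  rw [interior_Ici] at hx
  simp only [Function.iterate_succ, Function.iterate_zero, Function.comp, id, Real.deriv_sinh, Real.deriv_cosh]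
  exact Real.sinh_pos_iff.2 hx

lemma sinh_ratio {u v : ℝ} (hu : 0 < u) (huv : u < v) :
    v * Real.sinh u < u * Real.sinh v := by
  have hv : 0 < v := hu.trans huv
  have h := sinh_convex.2 (show (0:ℝ) ∈ Set.Ici (0:ℝ) by simp)
    (show v ∈ Set.Ici (0:ℝ) from hv.le) hv.ne
    (show 0 < 1 - u / v by rw [sub_pos, div_lt_one hv]; exact huv)
    (show 0 < u / v by positivity) (by ring)
  simp only [smul_eq_mul, mul_zero, zero_add, Real.sinh_zero] at h
  rw [div_mul_cancel₀ _ hv.ne', div_mul_eq_mul_div, lt_div_iff₀ hv] at h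
  linarith

lemma tanh_ratio {x s : ℝ} (hx : 0 < x) (hs : x < s) :
    x * Real.tanh s < s * Real.tanh x := by
  rw [Real.tanh_eq_sinh_div_cosh, Real.tanh_eq_sinh_div_cosh, ← mul_div_assoc, ← mul_div_assoc,
    div_lt_div_iff₀ (Real.cosh_pos _) (Real.cosh_pos _)]
  have h := sinh_ratio (u := s - x) (v := s + x) (by linarith) (by linarith)
  rw [Real.sinh_add, Real.sinh_sub] at h
  nlinarith

lemma tanh_pos' {x : ℝ} (hx : 0 < x) : 0 < Real.tanh x := by
  rw [Real.tanh_eq_sinh_div_cosh]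
  exact div_pos (Real.sinh_pos_iff.2 hx) (Real.cosh_pos _)

lemma tanh_mono' {x y : ℝ} (hy : x < y) : Real.tanh x < Real.tanh y := by
  rw [Real.tanh_eq_sinh_div_cosh, Real.tanh_eq_sinh_div_cosh,
    div_lt_div_iff₀ (Real.cosh_pos _) (Real.cosh_pos _)]
  have h := Real.sinh_pos_iff.2 (sub_pos.2 hy)
  rw [Real.sinh_sub] at h
  nlinarith

lemma J_pos {x : ℝ} (hx : 0 < x) : 0 < J x := mul_pos hx (tanh_pos' hx)

lemma J_lt {x y : ℝ} (hx : 0 < x) (h : x < y) : J x < J y :=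
  mul_lt_mul'' h (tanh_mono' h) hx.le (tanh_pos' hx).le

lemma sqrt_part {x s : ℝ} (hx : 0 < x) (hs : x < s) :
    x * √(J s) < s * √(J x) := by
  have hs0 := hx.trans hs
  apply lt_of_pow_lt_pow_left₀ 2 (mul_nonneg hs0.le (Real.sqrt_nonneg _))
  rw [mul_pow, mul_pow, Real.sq_sqrt (J_pos hs0).le, Real.sq_sqrt (J_pos hx).le]
  have := mul_lt_mul_of_pos_left (tanh_ratio hx hs) (mul_pos hx hs0)
  unfold J
  nlinarith

lemma omega_neg {x y : ℝ} (hx : 0 < x) (hy : 0 < y) : Ω x y (x + y) < 0 := by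
  have h1 := sqrt_part hx (show x < x + y by linarith)
  have h2 := sqrt_part hy (show y < x + y by linarith)
  have h3 : √(J x) < √(J (x + y)) := Real.sqrt_lt_sqrt (J_pos hx).le (J_lt hx (by linarith))
  have h4 : √(J y) < √(J (x + y)) := Real.sqrt_lt_sqrt (J_pos hy).le (J_lt hy (by linarith))
  have p := Real.sqrt_pos.2 (J_pos hx)
  have q := Real.sqrt_pos.2 (J_pos hy)
  have ex := Real.sq_sqrt (J_pos hx).le
  have ey := Real.sq_sqrt (J_pos hy).le
  have ez := Real.sq_sqrt (J_pos (add_pos hx hy)).le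
  have h5 : √(J (x + y)) < √(J x) + √(J y) := by
    apply lt_of_mul_lt_mul_left _ (add_pos hx hy).le
    linarith
  unfold Ω
  rw [← ex, ← ey, ← ez]
  generalize √(J x) = a at *
  generalize √(J y) = b at *
  generalize √(J (x + y)) = c at *
  have := mul_pos (mul_pos (mul_pos (show 0 < a + b + c by linarith) (show 0 < a + b - c by linarith))
    (show 0 < a - b + c by linarith)) (show 0 < -a + b + c by linarith)
  nlinarith

lemma omega_ne (ξ η : ℝ) (hξ : ξ ≠ 0) (hη : η ≠ 0) (hξη : ξ + η ≠ 0) :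
    Ω ξ η (-(ξ + η)) ≠ 0 := by
  apply ne_of_lt
  have e : ∀ x y z : ℝ, x + y = z → 0 < x → 0 < y →
      J x ^ 2 + J y ^ 2 + J z ^ 2 - 2 * J x * J y - 2 * J y * J z - 2 * J z * J x < 0 := by
    rintro x y z rfl hx hy
    exact omega_neg hx hy
  unfold Ω
  rw [J_neg]
  rcases lt_or_gt_of_ne hξ with h1 | h1 <;> rcases lt_or_gt_of_ne hη with h2 | h2
  · have := e (-ξ) (-η) (-(ξ + η)) (by ring) (by linarith) (by linarith)
    simp only [J_neg] at this
    linarith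
  · rcases lt_or_gt_of_ne hξη with h3 | h3
    · have := e (-(ξ + η)) η (-ξ) (by ring) (by linarith) (by linarith)
      simp only [J_neg] at this
      linarith
    · have := e (ξ + η) (-ξ) η (by ring) (by linarith) (by linarith)
      simp only [J_neg] at this
      linarith
  · rcases lt_or_gt_of_ne hξη with h3 | h3
    · have := e (-(ξ + η)) ξ (-η) (by ring) (by linarith) (by linarith)
      simp only [J_neg] at this
      linarith
    · have := e (ξ + η) (-η) ξ (by ring) (by linarith) (by linarith)
      simp only [J_neg] at this
      linarith
  · exact e ξ η (ξ + η) rfl h1 h2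

/-- The holomorphic normal-form symbols of the finite-depth gravity water-wave
system solve the (symmetrized) linear system cancelling the purely holomorphic
quadratic nonlinearity. -/
theorem normal_form_symbols_solve_system (ξ η : ℝ)
    (hξ : ξ ≠ 0) (hη : η ≠ 0) (hξη : ξ + η ≠ 0) :
    Ω ξ η (-(ξ + η)) ≠ 0 ∧
      ((ξ + η : ℝ) : ℂ) * Ah ξ η - 2 * (η : ℂ) * Bh ξ η -
        2 * (Real.tanh ξ : ℂ) * Ch ξ η = 0 ∧
      -(1 / 2 : ℂ) * ((ξ : ℂ) * Ah ξ η + (η : ℂ) * Ah η ξ) +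
        (Real.tanh (ξ + η) : ℂ) * Ch ξ η = Complex.I * (ξ : ℂ) * (η : ℂ) ∧
      -(1 / 2 : ℂ) * ((Real.tanh η : ℂ) * Ah ξ η + (Real.tanh ξ : ℂ) * Ah η ξ) +
        (Real.tanh (ξ + η) : ℂ) * Bh ξ η = 0 := by
  have hΩ := omega_ne ξ η hξ hη hξη
  have hs : Ω η ξ (-(η + ξ)) = Ω ξ η (-(ξ + η)) := by
    rw [add_comm η ξ]; unfold Ω; ring
  have hc : ((Ω ξ η (-(ξ + η)) : ℝ) : ℂ) ≠ 0 := by exact_mod_cast hΩ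
  have hd : ((Ω ξ η (-(ξ + η)) : ℝ) : ℂ) = (Ω ξ η (-(ξ + η)) : ℝ) := rfl
  conv_rhs at hd => unfold Ω
  refine ⟨hΩ, ?_, ?_, ?_⟩ <;> simp only [Ah, Bh, Ch] <;> (try rw [hs]) <;>
    generalize ((Ω ξ η (-(ξ + η)) : ℝ) : ℂ) = w at * <;>
    (try rw [add_comm η ξ]) <;> field_simp <;> (try rw [hd]) <;>
    simp only [J_neg] <;> unfold J <;> push_cast <;> ring
end
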